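/- arXiv:2505.15264 — 2 statements merged into one kernel-verified Lean document; each statement's English description precedes it below -/
import Mathlib

section
/- For every real x > 0 there exists a constant C_x > 0, depending only on x, such that for all integers μ ≥ 0 and all real k > 0: ‖E(k,μ,x)‖ ≤ C_x·√(cosh k). (Equivalently, |√(sinh x)·𝖯^{μ}_{ik−1/2}(cosh x)| ≤ C_x·√(cosh k)·‖Γ(1/2+μ+ik)/Γ(1/2−μ+ik)‖.) -/
open Real

/-- The Gauss hypergeometric series `₂F₁(a,b,c;z)`. -/
noncomputable def hyp2F1 (a b c z : ℂ) : ℂ :=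
  ∑' n : ℕ, (ascPochhammer ℂ n).eval a * (ascPochhammer ℂ n).eval b /
      ((ascPochhammer ℂ n).eval c * (n.factorial : ℂ)) * z ^ n

/-- `E(k,μ,x) = 2^{-μ} (tanh x)^{μ+1/2} (cosh x)^{-ik} (1/μ!)
  ₂F₁((μ+1/2+ik)/2, (μ+3/2+ik)/2, μ+1; tanh² x)`,
the weighted conical associated Legendre function `√(sinh x) 𝖯^{-μ}_{ik-1/2}(cosh x)`. -/
noncomputable def legE (k : ℝ) (μ : ℕ) (x : ℝ) : ℂ :=
  (2 : ℂ) ^ (-(μ : ℂ)) * ((Real.tanh x ^ ((μ : ℝ) + 1 / 2) : ℝ) : ℂ) *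
    ((Real.cosh x : ℂ) ^ (-(Complex.I * k))) * ((μ.factorial : ℂ))⁻¹ *
    hyp2F1 (((μ : ℂ) + 1 / 2 + Complex.I * k) / 2)
      (((μ : ℂ) + 3 / 2 + Complex.I * k) / 2) ((μ : ℂ) + 1)
      ((Real.tanh x ^ 2 : ℝ) : ℂ)

open Polynomial in
lemma legAux_binom (s z : ℂ) (hz : ‖z‖ < 1) :
    HasSum (fun m : ℕ => (ascPochhammer ℂ m).eval s / (m.factorial : ℂ) * z ^ m)
      (1 / (1 - z) ^ s) := by
  have h := (Complex.one_div_one_sub_cpow_hasFPowerSeriesOnBall_zero s).hasSum (y := z)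
    (by
      rw [← ENNReal.ofReal_one, Metric.eball_ofReal]
      simpa using hz)
  simp only [zero_add] at h
  refine (congrArg (fun f : ℕ → ℂ => HasSum f _) (funext fun m => ?_)).mpr h
  have h1 := Ring.factorial_nsmul_multichoose_eq_ascPochhammer s m
  rw [Polynomial.ascPochhammer_smeval_cast, Polynomial.ascPochhammer_smeval_eq_eval] at h1
  rw [← h1, Ring.multichoose_eq]
  have : (m.factorial : ℂ) ≠ 0 := by exact_mod_cast m.factorial_ne_zero
  simp [FormalMultilinearSeries.ofScalars]
  field_simp
  simp

lemma legAux_lower (s : ℂ) (hs : s.re = 1 / 2) (n : ℕ) :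
    1 / 2 ≤ ‖(ascPochhammer ℂ n).eval s‖ := by
  have key : ∀ n : ℕ, (n : ℝ) + 1 / 2 ≤ ‖s + n‖ := by
    intro n
    refine le_trans ?_ (Complex.re_le_norm _)
    simp [hs]; linarith
  cases n with
  | zero => simp; norm_num
  | succ n =>
    induction n with
    | zero => have := key 0; simp at this; simpa using this
    | succ n ih =>
      rw [ascPochhammer_succ_eval, norm_mul]
      have h := key (n + 1)
      have h1 : (1 : ℝ) ≤ ‖s + ((n + 1 : ℕ) : ℂ)‖ := by
        refine le_trans ?_ h
        push_cast
        have : (0 : ℝ) ≤ n := n.cast_nonneg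
        linarith
      nlinarith

lemma legAux_dup (a : ℂ) (n : ℕ) :
    (ascPochhammer ℂ (2 * n)).eval a =
      4 ^ n * ((ascPochhammer ℂ n).eval (a / 2) * (ascPochhammer ℂ n).eval ((a + 1) / 2)) := by
  induction n with
  | zero => simp
  | succ n ih =>
    rw [show 2 * (n + 1) = 2 * n + 1 + 1 by ring]
    simp only [ascPochhammer_succ_eval, ih]
    push_cast
    ring

lemma legAux_add (s : ℂ) (m n : ℕ) :
    (ascPochhammer ℂ (m + n)).eval s =
      (ascPochhammer ℂ m).eval s * (ascPochhammer ℂ n).eval (s + m) := by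
  rw [← ascPochhammer_mul]
  simp [Polynomial.eval_comp]

lemma legAux_int_exp (l : ℤ) :
    ∫ t in (0 : ℝ)..(2 * π), Complex.exp ((l * Complex.I) * t) =
      if l = 0 then (2 * π : ℂ) else 0 := by
  split_ifs with h
  · simp [h]
  · rw [integral_exp_mul_complex (by simp [h])]
    have : Complex.exp (l * Complex.I * ((2 * π : ℝ) : ℂ)) = 1 := by
      rw [Complex.exp_eq_one_iff]
      exact ⟨l, by push_cast; ring⟩
    rw [this]; simp

lemma legAux_expand (m μ : ℕ) (t : ℝ) :
    (Complex.cos t) ^ m * Complex.exp (-(μ * Complex.I) * t) =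
      ∑ j ∈ Finset.range (m + 1), ((m.choose j : ℂ) / 2 ^ m) *
        Complex.exp ((((2 * j - m - μ : ℤ) : ℂ) * Complex.I) * t) := by
  rw [Complex.cos, div_pow, add_pow, Finset.sum_div, Finset.sum_mul]
  refine Finset.sum_congr rfl fun j hj => ?_
  have hj' : j ≤ m := by simpa [Nat.lt_succ_iff] using hj
  rw [← Complex.exp_nat_mul, ← Complex.exp_nat_mul]
  have : Complex.exp ((((2 * j - m - μ : ℤ) : ℂ) * Complex.I) * t) =
      Complex.exp (j * (t * Complex.I)) * Complex.exp (((m - j : ℕ) : ℂ) * (-t * Complex.I)) *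
        Complex.exp (-(μ * Complex.I) * t) := by
    rw [← Complex.exp_add, ← Complex.exp_add]
    congr 1
    push_cast [Nat.cast_sub hj']
    ring
  rw [this]
  ring

lemma legAux_J (m μ : ℕ) :
    ∫ t in (0 : ℝ)..(2 * π), (Complex.cos t) ^ m * Complex.exp (-(μ * Complex.I) * t) =
      ∑ j ∈ Finset.range (m + 1), ((m.choose j : ℂ) / 2 ^ m) *
        (if (2 * j - m - μ : ℤ) = 0 then (2 * π : ℂ) else 0) := by
  simp_rw [legAux_expand]
  rw [intervalIntegral.integral_finsetSum]
  · refine Finset.sum_congr rfl fun j _ => ?_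
    rw [intervalIntegral.integral_const_mul, legAux_int_exp]
  · intro j _
    apply Continuous.intervalIntegrable
    fun_prop

lemma legAux_J_zero (m μ : ℕ) (h : ∀ n : ℕ, μ + 2 * n ≠ m) :
    ∫ t in (0 : ℝ)..(2 * π), (Complex.cos t) ^ m * Complex.exp (-(μ * Complex.I) * t) = 0 := by
  rw [legAux_J]
  refine Finset.sum_eq_zero fun j hj => ?_
  have hj' : j ≤ m := by simpa [Nat.lt_succ_iff] using hj
  rw [if_neg, mul_zero]
  intro h0
  exact h (m - j) (by omega)

lemma legAux_J_val (n μ : ℕ) :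
    ∫ t in (0 : ℝ)..(2 * π), (Complex.cos t) ^ (μ + 2 * n) *
      Complex.exp (-(μ * Complex.I) * t) =
      ((μ + 2 * n).choose (μ + n) : ℂ) / 2 ^ (μ + 2 * n) * (2 * π) := by
  rw [legAux_J, Finset.sum_eq_single (μ + n)]
  · rw [if_pos]; push_cast; ring
  · intro j _ hj
    rw [if_neg, mul_zero]
    intro h0
    exact hj (by push_cast at h0; omega)
  · intro h
    exact absurd (Finset.mem_range.2 (by omega)) h

lemma legAux_hasSum (s : ℂ) (τ : ℝ) (h0 : 0 ≤ τ) (h1 : τ < 1) (μ : ℕ) :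
    HasSum (fun m : ℕ => (ascPochhammer ℂ m).eval s / (m.factorial : ℂ) * (τ : ℂ) ^ m *
      ∫ t in (0 : ℝ)..(2 * π), (Complex.cos t) ^ m * Complex.exp (-(μ * Complex.I) * t))
      (∫ t in (0 : ℝ)..(2 * π), 1 / (1 - τ * Complex.cos t) ^ s *
        Complex.exp (-(μ * Complex.I) * t)) := by
  simp_rw [← intervalIntegral.integral_const_mul]
  have hcos : ∀ t : ℝ, ‖Complex.cos t‖ ≤ 1 := fun t => by
    rw [← Complex.ofReal_cos, Complex.norm_real]; exact Real.abs_cos_le_one t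
  have hexp : ∀ t : ℝ, ‖Complex.exp (-(μ * Complex.I) * t)‖ = 1 := fun t => by
    rw [Complex.norm_exp]; simp
  apply intervalIntegral.hasSum_integral_of_dominated_convergence
    (bound := fun m _ => ‖(ascPochhammer ℂ m).eval s / (m.factorial : ℂ) * (τ : ℂ) ^ m‖)
  · intro m
    apply Continuous.aestronglyMeasurable
    fun_prop
  · intro m
    refine Filter.Eventually.of_forall fun t _ => ?_
    rw [norm_mul _ (_ * Complex.exp _), norm_mul _ (Complex.exp _), hexp, mul_one, norm_pow]
    exact mul_le_of_le_one_right (norm_nonneg _) (pow_le_one₀ (norm_nonneg _) (hcos t))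
  · refine Filter.Eventually.of_forall fun t _ => ?_
    exact (legAux_binom s τ (by simpa [abs_of_nonneg h0] using h1)).summable.norm
  · simp
  · refine Filter.Eventually.of_forall fun t _ => ?_
    have hz : ‖(τ : ℂ) * Complex.cos t‖ < 1 := by
      rw [norm_mul, Complex.norm_real, Real.norm_of_nonneg h0]
      exact lt_of_le_of_lt (mul_le_of_le_one_right h0 (hcos t)) h1
    refine (congrArg (fun f : ℕ → ℂ => HasSum f _) (funext fun m => ?_)).mpr
      ((legAux_binom s _ hz).mul_right (Complex.exp (-(μ * Complex.I) * t)))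
    rw [mul_pow]; ring

lemma legAux_int_bound (s : ℂ) (hs : s.re = 1 / 2) (τ : ℝ) (h0 : 0 ≤ τ) (h1 : τ < 1) (μ : ℕ) :
    ‖∫ t in (0 : ℝ)..(2 * π), 1 / (1 - τ * Complex.cos t) ^ s *
        Complex.exp (-(μ * Complex.I) * t)‖ ≤ (1 - τ) ^ (-(1 / 2) : ℝ) * (2 * π) := by
  have := intervalIntegral.norm_integral_le_of_norm_le_const (a := 0) (b := 2 * π)
    (f := fun t : ℝ => 1 / (1 - τ * Complex.cos t) ^ s *
        Complex.exp (-(μ * Complex.I) * t)) (C := (1 - τ) ^ (-(1 / 2) : ℝ)) ?_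
  · simpa [abs_of_pos Real.pi_pos] using this
  · intro t _
    have hc : 1 - τ ≤ 1 - τ * Real.cos t := by nlinarith [Real.cos_le_one t]
    have e : (1 - τ * Complex.cos t : ℂ) = ((1 - τ * Real.cos t : ℝ) : ℂ) := by push_cast; rfl
    have hexp : ‖Complex.exp (-(μ * Complex.I) * t)‖ = 1 := by
      rw [Complex.norm_exp]; simp
    rw [norm_mul, hexp, mul_one, e, norm_div, Complex.norm_cpow_eq_rpow_re_of_pos (by linarith),
      hs, norm_one, one_div, ← Real.rpow_neg (by linarith)]
    exact Real.rpow_le_rpow_of_nonpos (by linarith) hc (by norm_num)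

lemma legAux_term (s : ℂ) (τ : ℝ) (μ n : ℕ) :
    (ascPochhammer ℂ (μ + 2 * n)).eval s / ((μ + 2 * n).factorial : ℂ) * (τ : ℂ) ^ (μ + 2 * n) *
      (((μ + 2 * n).choose (μ + n) : ℂ) / 2 ^ (μ + 2 * n) * (2 * π)) =
    (2 * π * (ascPochhammer ℂ μ).eval s * τ ^ μ / (2 ^ μ * μ.factorial)) *
      ((ascPochhammer ℂ n).eval ((s + μ) / 2) * (ascPochhammer ℂ n).eval ((s + μ + 1) / 2) /
      ((ascPochhammer ℂ n).eval ((μ : ℂ) + 1) * (n.factorial : ℂ)) * ((τ ^ 2 : ℝ) : ℂ) ^ n) := by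
  have hf : ∀ j : ℕ, (j.factorial : ℂ) ≠ 0 := fun j => by exact_mod_cast j.factorial_ne_zero
  have hp : (ascPochhammer ℂ n).eval ((μ : ℂ) + 1) = ((μ + n).factorial : ℂ) / μ.factorial := by
    rw [eq_div_iff (hf _), mul_comm]
    exact_mod_cast factorial_mul_ascPochhammer ℂ μ n
  have hc : ((μ + 2 * n).choose (μ + n) : ℂ) =
      ((μ + 2 * n).factorial : ℂ) / ((μ + n).factorial * n.factorial) := by
    rw [Nat.cast_choose ℂ (by omega), show μ + 2 * n - (μ + n) = n by omega]
  rw [hp, hc, legAux_add, legAux_dup]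
  have h1 := hf μ
  have h2 := hf n
  have h3 := hf (μ + n)
  have h4 := hf (μ + 2 * n)
  have h5 : (2 : ℂ) ^ (2 * n) = 4 ^ n := by rw [pow_mul]; norm_num
  have h6 : (4 : ℂ) ^ n ≠ 0 := pow_ne_zero _ (by norm_num)
  rw [pow_add (2 : ℂ), h5, pow_add (τ : ℂ), pow_mul]
  push_cast
  field_simp

lemma legAux_hyp (s : ℂ) (τ : ℝ) (h0 : 0 ≤ τ) (h1 : τ < 1) (μ : ℕ) :
    (2 * π * (ascPochhammer ℂ μ).eval s * τ ^ μ / (2 ^ μ * μ.factorial)) *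
      hyp2F1 ((s + μ) / 2) ((s + μ + 1) / 2) ((μ : ℂ) + 1) ((τ ^ 2 : ℝ) : ℂ) =
    ∫ t in (0 : ℝ)..(2 * π), 1 / (1 - τ * Complex.cos t) ^ s *
        Complex.exp (-(μ * Complex.I) * t) := by
  have h := legAux_hasSum s τ h0 h1 μ
  have hinj : Function.Injective (fun n : ℕ => μ + 2 * n) := fun a b hab => by
    simp only at hab; omega
  rw [← hinj.hasSum_iff] at h
  · rw [← h.tsum_eq, hyp2F1, ← tsum_mul_left]
    refine tsum_congr fun n => ?_
    simp only [Function.comp]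
    rw [legAux_J_val, legAux_term]
  · intro m hm
    rw [legAux_J_zero m μ (fun n hn => hm ⟨n, hn⟩), mul_zero]

/-- For fixed `x > 0`, `|E(k,μ,x)| ≤ C_x √(cosh k)` uniformly in `μ ≥ 0` and `k > 0`. -/
theorem legE_bound (x : ℝ) (hx : 0 < x) :
    ∃ C > 0, ∀ (μ : ℕ) (k : ℝ), 0 < k →
      ‖legE k μ x‖ ≤ C * Real.sqrt (Real.cosh k) := by
  have hch : 0 < Real.cosh x := Real.cosh_pos x
  have h0 : 0 < Real.tanh x := by
    rw [Real.tanh_eq_sinh_div_cosh]; exact div_pos (Real.sinh_pos_iff.2 hx) hch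
  have h1 : Real.tanh x < 1 := Real.tanh_lt_one x
  unfold legE
  generalize Real.tanh x = τ at h0 h1 ⊢
  have hA : 0 < (1 - τ) ^ (-(1 / 2) : ℝ) := Real.rpow_pos_of_pos (by linarith) _
  have hB : 0 < τ ^ (1 / 2 : ℝ) := Real.rpow_pos_of_pos h0 _
  refine ⟨2 * (τ ^ (1 / 2 : ℝ) * (1 - τ) ^ (-(1 / 2) : ℝ)), by positivity, fun μ k hk => ?_⟩
  have hk1 : 1 ≤ Real.sqrt (Real.cosh k) := by
    rw [Real.one_le_sqrt]; exact Real.one_le_cosh k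
  refine le_trans ?_ (le_mul_of_one_le_right (by positivity) hk1)
  set s : ℂ := 1 / 2 + Complex.I * k with hsdef
  have hs : s.re = 1 / 2 := by simp [s]
  have hI := legAux_int_bound s hs τ h0.le h1 μ
  rw [← legAux_hyp s τ h0.le h1 μ] at hI
  have hl := legAux_lower s hs μ
  have e1 : ((μ : ℂ) + 1 / 2 + Complex.I * k) / 2 = (s + μ) / 2 := by rw [hsdef]; ring
  have e2 : ((μ : ℂ) + 3 / 2 + Complex.I * k) / 2 = (s + μ + 1) / 2 := by rw [hsdef]; ring
  rw [e1, e2]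
  generalize hyp2F1 ((s + μ) / 2) ((s + μ + 1) / 2) ((μ : ℂ) + 1) ((τ ^ 2 : ℝ) : ℂ) = H at hI ⊢
  have n1 : ‖(2 : ℂ) ^ (-(μ : ℂ))‖ = (2 ^ μ)⁻¹ := by
    rw [Complex.cpow_neg, Complex.cpow_natCast]; simp
  have n2 : ‖((τ ^ ((μ : ℝ) + 1 / 2) : ℝ) : ℂ)‖ = τ ^ μ * τ ^ (1 / 2 : ℝ) := by
    rw [Complex.norm_real, Real.norm_of_nonneg (Real.rpow_nonneg h0.le _),
      Real.rpow_add h0, Real.rpow_natCast]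
  have n3 : ‖(Real.cosh x : ℂ) ^ (-(Complex.I * k))‖ = 1 := by
    rw [Complex.norm_cpow_eq_rpow_re_of_pos hch]; simp
  have n4 : ‖((μ.factorial : ℂ))⁻¹‖ = (μ.factorial : ℝ)⁻¹ := by simp
  rw [norm_mul, norm_mul, norm_mul, norm_mul, n1, n2, n3, n4]
  have n5 : ‖(2 * π * (ascPochhammer ℂ μ).eval s * τ ^ μ / (2 ^ μ * μ.factorial) : ℂ) * H‖ =
      ‖(ascPochhammer ℂ μ).eval s‖ * ((2 ^ μ)⁻¹ * τ ^ μ * (μ.factorial : ℝ)⁻¹ * ‖H‖) * (2 * π) := by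
    simp [abs_of_pos h0, abs_of_pos Real.pi_pos]
    ring
  rw [n5] at hI
  have hI2 := le_of_mul_le_mul_right hI (by positivity : (0 : ℝ) < 2 * π)
  set Q := (2 ^ μ)⁻¹ * τ ^ μ * (μ.factorial : ℝ)⁻¹ * ‖H‖ with hQ
  have hQ0 : 0 ≤ Q := by positivity
  have hfin : Q ≤ 2 * (1 - τ) ^ (-(1 / 2) : ℝ) := by nlinarith
  calc _ = τ ^ (1 / 2 : ℝ) * Q := by rw [hQ]; ring
    _ ≤ τ ^ (1 / 2 : ℝ) * (2 * (1 - τ) ^ (-(1 / 2) : ℝ)) := by gcongr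
    _ = _ := by ring
end

section
/- For every real k > 0 and every real x > 0 there exist constants β > 0 and C > 0 such that for all integers μ ≥ 0: ‖Γ(1/2+μ+ik)‖·‖E(k,μ,x)‖ ≤ C·e^{−βμ}. (Equivalently, |𝖯^{μ}_{ik−1/2}(cosh x)| ≤ C·e^{−βμ}/‖Γ(1/2−μ+ik)‖ for large μ; moreover β = β_x can be chosen increasing in x.) -/
open Real

theorem gamma_norm_le (s : ℂ) (hs : 0 < s.re) : ‖Complex.Gamma s‖ ≤ Real.Gamma s.re := by
  rw [Complex.Gamma_eq_integral hs, Real.Gamma_eq_integral hs, Complex.GammaIntegral]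
  refine (MeasureTheory.norm_integral_le_integral_norm _).trans (le_of_eq ?_)
  refine MeasureTheory.setIntegral_congr_fun measurableSet_Ioi fun t ht => ?_
  have ht' : (0 : ℝ) < t := ht
  simp only [norm_mul, Complex.norm_cpow_eq_rpow_re_of_pos ht', Complex.sub_re, Complex.one_re]
  rw [Complex.norm_of_nonneg (Real.exp_pos _).le]

theorem gamma_half_le (N : ℕ) : Real.Gamma (1 / 2 + N) ≤ √π * N.factorial := by
  induction N with
  | zero => simp [← Real.Gamma_one_half_eq]
  | succ N ih =>
    have h0 : (0 : ℝ) ≤ N := N.cast_nonneg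
    have h : (1 / 2 + ((N + 1 : ℕ) : ℝ)) = (1 / 2 + N) + 1 := by push_cast; ring
    rw [h, Real.Gamma_add_one (by positivity), Nat.factorial_succ]
    push_cast
    have hp : (0 : ℝ) ≤ √π * N.factorial := by positivity
    calc (1 / 2 + (N : ℝ)) * Real.Gamma (1 / 2 + N) ≤ (1 / 2 + N) * (√π * N.factorial) := by
          gcongr
      _ ≤ (N + 1) * (√π * N.factorial) :=
          mul_le_mul_of_nonneg_right (by linarith) hp
      _ = _ := by ring

theorem gamma_bound (k : ℝ) (N : ℕ) :
    ‖Complex.Gamma (1 / 2 + N + Complex.I * k)‖ ≤ √π * N.factorial := by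
  have h : (1 / 2 + (N : ℂ) + Complex.I * k).re = 1 / 2 + N := by simp
  have h0 : (0 : ℝ) ≤ N := N.cast_nonneg
  refine (gamma_norm_le _ (by rw [h]; positivity)).trans ?_
  rw [h]; exact gamma_half_le N

theorem gamma_poch (s : ℂ) (hs : 0 < s.re) (n : ℕ) :
    Complex.Gamma s * ((ascPochhammer ℂ n).eval (s / 2) *
      (ascPochhammer ℂ n).eval ((s + 1) / 2)) * 4 ^ n = Complex.Gamma (s + 2 * n) := by
  induction n with
  | zero => simp
  | succ n ih =>
    have h0 : (0 : ℝ) ≤ n := n.cast_nonneg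
    have h1 : s + 2 * n ≠ 0 := by
      intro h
      have := congrArg Complex.re h
      simp at this
      linarith
    have h2 : s + 2 * n + 1 ≠ 0 := by
      intro h
      have := congrArg Complex.re h
      simp at this
      linarith
    have e : s + 2 * ((n + 1 : ℕ) : ℂ) = s + 2 * n + 1 + 1 := by push_cast; ring
    rw [e, Complex.Gamma_add_one _ h2, Complex.Gamma_add_one _ h1, ← ih,
      ascPochhammer_succ_eval, ascPochhammer_succ_eval]
    ring

theorem poch_nat (μ n : ℕ) :
    (μ.factorial : ℂ) * (ascPochhammer ℂ n).eval ((μ : ℂ) + 1) = ((μ + n).factorial : ℂ) := by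
  induction n with
  | zero => simp
  | succ n ih =>
    rw [ascPochhammer_succ_eval, ← mul_assoc, ih, ← add_assoc, Nat.factorial_succ]
    push_cast; ring

theorem term_bound (k : ℝ) (μ n : ℕ) (t : ℝ) (ht : 0 ≤ t) :
    ‖Complex.Gamma (1 / 2 + μ + Complex.I * k) *
      ((ascPochhammer ℂ n).eval (((μ : ℂ) + 1 / 2 + Complex.I * k) / 2) *
       (ascPochhammer ℂ n).eval (((μ : ℂ) + 3 / 2 + Complex.I * k) / 2) /
      ((ascPochhammer ℂ n).eval ((μ : ℂ) + 1) * (n.factorial : ℂ)) * ((t ^ 2 : ℝ) : ℂ) ^ n)‖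
    ≤ √π * μ.factorial * 2 ^ μ * (t ^ 2) ^ n := by
  have h0 : (0 : ℝ) ≤ μ := μ.cast_nonneg
  have hs : 0 < (1 / 2 + (μ : ℂ) + Complex.I * k).re := by simp; positivity
  have hg := gamma_poch _ hs n
  have e1 : (μ : ℂ) + 1 / 2 + Complex.I * k = 1 / 2 + μ + Complex.I * k := by ring
  have e2 : (μ : ℂ) + 3 / 2 + Complex.I * k = 1 / 2 + μ + Complex.I * k + 1 := by ring
  rw [e1, e2]
  have e3 : 1 / 2 + (μ : ℂ) + Complex.I * k + 2 * n =
      1 / 2 + ((μ + 2 * n : ℕ) : ℂ) + Complex.I * k := by push_cast; ring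
  rw [e3] at hg
  set A := (ascPochhammer ℂ n).eval ((1 / 2 + (μ : ℂ) + Complex.I * k) / 2)
  set B := (ascPochhammer ℂ n).eval ((1 / 2 + (μ : ℂ) + Complex.I * k + 1) / 2)
  have hP := poch_nat μ n
  have hμ : (μ.factorial : ℂ) ≠ 0 := by exact_mod_cast μ.factorial_ne_zero
  have hμn : ((μ + n).factorial : ℂ) ≠ 0 := by exact_mod_cast (μ + n).factorial_ne_zero
  have hn : (n.factorial : ℂ) ≠ 0 := by exact_mod_cast n.factorial_ne_zero
  have hP' : (ascPochhammer ℂ n).eval ((μ : ℂ) + 1) = (μ + n).factorial / μ.factorial := by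
    rw [← hP]; field_simp
  rw [hP']
  have key : Complex.Gamma (1 / 2 + μ + Complex.I * k) *
      (A * B / ((μ + n).factorial / μ.factorial * (n.factorial : ℂ)) * ((t ^ 2 : ℝ) : ℂ) ^ n) =
      Complex.Gamma (1 / 2 + ((μ + 2 * n : ℕ) : ℂ) + Complex.I * k) *
      ((μ.factorial / (4 ^ n * (μ + n).factorial * n.factorial) * (t ^ 2) ^ n : ℝ) : ℂ) := by
    rw [← hg]; push_cast; field_simp
  rw [key, norm_mul, Complex.norm_of_nonneg (by positivity)]
  have hch : ((μ + 2 * n).choose n : ℝ) * n.factorial * (μ + n).factorial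
      = (μ + 2 * n).factorial := by
    have := Nat.choose_mul_factorial_mul_factorial (show n ≤ μ + 2 * n by lia)
    rw [show μ + 2 * n - n = μ + n by lia] at this
    exact_mod_cast this
  have h2 : ((μ + 2 * n).choose n : ℝ) ≤ 2 ^ (μ + 2 * n) := by
    exact_mod_cast Nat.choose_le_two_pow _ _
  calc _ ≤ √π * (μ + 2 * n).factorial *
        (μ.factorial / (4 ^ n * (μ + n).factorial * n.factorial) * (t ^ 2) ^ n) := by
        gcongr; exact gamma_bound k _
    _ = √π * μ.factorial * (((μ + 2 * n).choose n : ℝ) / 4 ^ n) * (t ^ 2) ^ n := by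
        rw [← hch]; field_simp
    _ ≤ √π * μ.factorial * (2 ^ (μ + 2 * n) / 4 ^ n) * (t ^ 2) ^ n := by gcongr
    _ = _ := by
        rw [pow_add, pow_mul]; norm_num

/-- For fixed `k > 0` and `x > 0` there are `β > 0` and `C > 0` with
`|Γ(1/2+μ+ik)| · |E(k,μ,x)| ≤ C e^{-βμ}` for every integer `μ ≥ 0`;
equivalently `|𝖯^{μ}_{ik-1/2}(cosh x)| ≤ C e^{-βμ}/|Γ(1/2-μ+ik)|`. -/
theorem legE_large_mu_decay (k x : ℝ) (hk : 0 < k) (hx : 0 < x) :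
    ∃ β > 0, ∃ C > 0, ∀ μ : ℕ,
      ‖Complex.Gamma (1 / 2 + μ + Complex.I * k)‖ * ‖legE k μ x‖ ≤
        C * Real.exp (-β * μ) := by
  set t := Real.tanh x with htdef
  have ht0 : 0 < t := by
    rw [htdef, Real.tanh_eq_sinh_div_cosh]
    exact div_pos (Real.sinh_pos_iff.2 hx) (Real.cosh_pos x)
  have ht1 : t < 1 := Real.tanh_lt_one x
  have ht2 : t ^ 2 < 1 := by nlinarith
  have h1 : 0 < 1 - t ^ 2 := by linarith
  refine ⟨-Real.log t, neg_pos.2 (Real.log_neg ht0 ht1),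
    √π * t ^ (1 / 2 : ℝ) * (1 - t ^ 2)⁻¹, by positivity, fun μ => ?_⟩
  have hexp : Real.exp (- -Real.log t * μ) = t ^ μ := by
    rw [neg_neg, mul_comm, Real.exp_nat_mul, Real.exp_log ht0]
  rw [hexp]
  have hF : ‖Complex.Gamma (1 / 2 + μ + Complex.I * k)‖ *
      ‖hyp2F1 (((μ : ℂ) + 1 / 2 + Complex.I * k) / 2)
      (((μ : ℂ) + 3 / 2 + Complex.I * k) / 2) ((μ : ℂ) + 1) ((t ^ 2 : ℝ) : ℂ)‖ ≤
      √π * μ.factorial * 2 ^ μ * (1 - t ^ 2)⁻¹ := by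
    rw [← norm_mul, hyp2F1, ← tsum_mul_left]
    exact tsum_of_norm_bounded
      ((hasSum_geometric_of_lt_one (by positivity) ht2).mul_left _)
      (fun n => term_bound k μ n t ht0.le)
  have hc : ‖(Real.cosh x : ℂ) ^ (-(Complex.I * k))‖ = 1 := by
    rw [Complex.norm_cpow_eq_rpow_re_of_pos (Real.cosh_pos x)]; simp
  have h2 : ‖(2 : ℂ) ^ (-(μ : ℂ))‖ = (2 ^ μ)⁻¹ := by
    rw [Complex.cpow_neg, Complex.cpow_natCast]; simp
  have htp : ‖((t ^ ((μ : ℝ) + 1 / 2) : ℝ) : ℂ)‖ = t ^ μ * t ^ (1 / 2 : ℝ) := by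
    rw [Complex.norm_of_nonneg (by positivity), Real.rpow_add ht0, Real.rpow_natCast]
  have hfac : ‖((μ.factorial : ℂ))⁻¹‖ = (μ.factorial : ℝ)⁻¹ := by simp
  have hfne : (μ.factorial : ℝ) ≠ 0 := by exact_mod_cast μ.factorial_ne_zero
  rw [legE, ← htdef]
  simp only [norm_mul]
  rw [hc, h2, htp, hfac]
  calc _ = (2 ^ μ)⁻¹ * (t ^ μ * t ^ (1 / 2 : ℝ)) * (μ.factorial : ℝ)⁻¹ *
        (‖Complex.Gamma (1 / 2 + μ + Complex.I * k)‖ *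
      ‖hyp2F1 (((μ : ℂ) + 1 / 2 + Complex.I * k) / 2)
      (((μ : ℂ) + 3 / 2 + Complex.I * k) / 2) ((μ : ℂ) + 1) ((t ^ 2 : ℝ) : ℂ)‖) := by ring
    _ ≤ (2 ^ μ)⁻¹ * (t ^ μ * t ^ (1 / 2 : ℝ)) * (μ.factorial : ℝ)⁻¹ *
        (√π * μ.factorial * 2 ^ μ * (1 - t ^ 2)⁻¹) := by gcongr
    _ = _ := by field_simp
end
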